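/- For a smooth function f with compact support on ℝⁿ (n ≥ 3), the Newtonian-potential identity holds: f(x) = -1/((n-2) S_{n-1}) ∫_{ℝⁿ} Δf(y) / ‖x - y‖^{n-2} dy, where S_{n-1} is the surface area of the unit (n-1)-sphere. -/

import Mathlib

open MeasureTheory

/-- The Euclidean Laplacian of `f : ℝⁿ → ℝ`: the sum of the second partial
derivatives `∑ i, ∂²f/∂xᵢ²`. -/
noncomputable def euclideanLaplacian {n : ℕ} (f : EuclideanSpace ℝ (Fin n) → ℝ)
    (x : EuclideanSpace ℝ (Fin n)) : ℝ :=
  ∑ i : Fin n,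
    fderiv ℝ (fun y => fderiv ℝ f y (EuclideanSpace.single i 1)) x (EuclideanSpace.single i 1)

/-- The surface area `S_{n-1}` of the unit `(n-1)`-sphere in `ℝⁿ`, equal to `n`
times the volume of the unit ball. -/
noncomputable def sphereArea (n : ℕ) : ℝ :=
  n * (volume (Metric.ball (0 : EuclideanSpace ℝ (Fin n)) 1)).toReal

/-!
Let `d` be the dimension. The kernel `‖z‖ ^ (2 - d)` is smoothed to
`(ε ^ 2 + ‖z‖ ^ 2) ^ ((2 - d) / 2)`, whose Laplacian is `-(d - 2) * d` times the function
`ε ^ 2 * (ε ^ 2 + ‖z‖ ^ 2) ^ (-(d + 2) / 2)`. The latter is a rescaled bump of constant mass, equal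
to the volume of the unit ball, so it concentrates at the origin as `ε → 0`. Moving the Laplacian
from `f` to the smoothed kernel by Green's identity and letting `ε → 0` on both sides gives the
result; no boundary term ever appears.
-/

open Filter Topology Module Metric Set Bornology
open scoped Laplacian RealInnerProductSpace

section Laplacian

variable {E F : Type*} [NormedAddCommGroup E] [InnerProductSpace ℝ E]
  [NormedAddCommGroup F] [NormedSpace ℝ F] {f : E → F}

theorem hasFDerivAt_comp_norm_sub_sq {g : ℝ → ℝ} {g' : ℝ} {x y : E}
    (hg : HasDerivAt g g' (‖y - x‖ ^ 2)) :
    HasFDerivAt (fun z ↦ g (‖z - x‖ ^ 2)) ((2 * g') • innerSL ℝ (y - x)) y := by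
  have hnorm : HasFDerivAt (fun z ↦ ‖z - x‖ ^ 2) ((2 : ℝ) • innerSL ℝ (y - x)) y := by
    simpa [two_smul] using ((hasFDerivAt_id y).sub_const x).norm_sq
  exact (hg.comp_hasFDerivAt y hnorm).congr_fderiv (by rw [smul_smul, mul_comm])

variable [FiniteDimensional ℝ E]

theorem laplacian_apply_eq_sum_fderiv_fderiv {ι : Type*} [Fintype ι] (v : OrthonormalBasis ι ℝ E)
    (f : E → F) (x : E) : Δ f x = ∑ i, fderiv ℝ (fderiv ℝ f) x (v i) (v i) := by
  simp [InnerProductSpace.laplacian_eq_iteratedFDeriv_orthonormalBasis f v,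
    iteratedFDeriv_two_apply]

theorem laplacian_apply_eq_sum_fderiv_fderiv_apply {ι : Type*} [Fintype ι]
    (v : OrthonormalBasis ι ℝ E) (hf : ContDiff ℝ 2 f) (x : E) :
    Δ f x = ∑ i, fderiv ℝ (fun y ↦ fderiv ℝ f y (v i)) x (v i) := by
  have hf' : Differentiable ℝ (fderiv ℝ f) :=
    (hf.fderiv_right (m := 1) (by norm_num)).differentiable one_ne_zero
  rw [laplacian_apply_eq_sum_fderiv_fderiv v]
  refine Finset.sum_congr rfl fun i _ ↦ ?_
  rw [fderiv_clm_apply (hf' x) (differentiableAt_const _)]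
  simp

theorem euclideanLaplacian_eq_laplacian {n : ℕ} {f : EuclideanSpace ℝ (Fin n) → ℝ}
    (hf : ContDiff ℝ 2 f) : euclideanLaplacian f = Δ f := by
  ext x
  simp [laplacian_apply_eq_sum_fderiv_fderiv_apply (EuclideanSpace.basisFun (Fin n) ℝ) hf x,
    euclideanLaplacian]

theorem continuous_laplacian (hf : ContDiff ℝ 2 f) : Continuous (Δ f) := by
  have : Continuous (iteratedFDeriv ℝ 2 f) := hf.continuous_iteratedFDeriv le_rfl
  rw [InnerProductSpace.laplacian_eq_iteratedFDeriv_stdOrthonormalBasis]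
  fun_prop

theorem hasCompactSupport_laplacian (hf : HasCompactSupport f) : HasCompactSupport (Δ f) := by
  rw [InnerProductSpace.laplacian_eq_iteratedFDeriv_stdOrthonormalBasis]
  exact (hf.iteratedFDeriv (𝕜 := ℝ) 2).comp_left
    (g := fun T : E [×2]→L[ℝ] F ↦
      ∑ i, T ![stdOrthonormalBasis ℝ E i, stdOrthonormalBasis ℝ E i]) (by simp)

theorem laplacian_comp_norm_sub_sq {g g' : ℝ → ℝ} {g'' : ℝ} {x y : E}
    (hg : ∀ s, 0 ≤ s → HasDerivAt g (g' s) s) (hg' : HasDerivAt g' g'' (‖y - x‖ ^ 2)) :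
    Δ (fun z ↦ g (‖z - x‖ ^ 2)) y
      = 2 * finrank ℝ E * g' (‖y - x‖ ^ 2) + 4 * ‖y - x‖ ^ 2 * g'' := by
  have hgrad : fderiv ℝ (fun z ↦ g (‖z - x‖ ^ 2))
      = fun z ↦ (2 * g' (‖z - x‖ ^ 2)) • innerSL ℝ (z - x) := by
    funext z
    exact (hasFDerivAt_comp_norm_sub_sq (hg _ (by positivity))).fderiv
  have hinner : HasFDerivAt (fun z ↦ innerSL ℝ (z - x)) (innerSL ℝ) y :=
    (innerSL ℝ).hasFDerivAt.comp y ((hasFDerivAt_id y).sub_const x)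
  have hhess (v : E) : fderiv ℝ (fderiv ℝ (fun z ↦ g (‖z - x‖ ^ 2))) y v v
      = 2 * g' (‖y - x‖ ^ 2) * ‖v‖ ^ 2 + 4 * g'' * ⟪y - x, v⟫ ^ 2 := by
    rw [hgrad, (((hasFDerivAt_comp_norm_sub_sq hg').const_mul 2).fun_smul hinner).fderiv]
    have hself : innerSL ℝ v v = ‖v‖ ^ 2 := real_inner_self_eq_norm_sq v
    simp only [add_apply, smul_apply, ContinuousLinearMap.smulRight_apply, innerSL_apply_apply,
      smul_eq_mul]
    linear_combination (2 * g' (‖y - x‖ ^ 2)) * hself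
  have hsum : ∑ i, ⟪y - x, stdOrthonormalBasis ℝ E i⟫ ^ 2 = ‖y - x‖ ^ 2 :=
    (stdOrthonormalBasis ℝ E).sum_sq_inner_left (y - x)
  rw [laplacian_apply_eq_sum_fderiv_fderiv (stdOrthonormalBasis ℝ E)]
  simp only [hhess, OrthonormalBasis.norm_eq_one, Finset.sum_add_distrib, ← Finset.mul_sum, hsum,
    one_pow, Finset.sum_const, Finset.card_univ, Fintype.card_fin, nsmul_eq_mul]
  ring

end Laplacian

section Green

variable {E F : Type*} [NormedAddCommGroup E] [NormedSpace ℝ E] [NormedAddCommGroup F]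
  [NormedSpace ℝ F] {u : E → ℝ} {f : E → F}

theorem contDiff_fderiv_apply_const {m n : WithTop ℕ∞} (hf : ContDiff ℝ n f) (hmn : m + 1 ≤ n)
    (v : E) : ContDiff ℝ m (fun y ↦ fderiv ℝ f y v) :=
  (hf.fderiv_right hmn).clm_apply contDiff_const

theorem continuous_fderiv_fderiv_apply (hf : ContDiff ℝ 2 f) (v w : E) :
    Continuous (fun y ↦ fderiv ℝ (fun z ↦ fderiv ℝ f z v) y w) :=
  have hf' : ContDiff ℝ 1 (fun z ↦ fderiv ℝ f z v) :=
    contDiff_fderiv_apply_const hf (by norm_num) v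
  (contDiff_fderiv_apply_const (m := 0) hf' (by norm_num) w).continuous

variable [FiniteDimensional ℝ E] [MeasurableSpace E] [BorelSpace E] {μ : Measure E}
  [μ.IsAddHaarMeasure]

theorem integral_smul_fderiv_eq_neg_fderiv_smul_of_hasCompactSupport (hu : ContDiff ℝ 1 u)
    (hf : ContDiff ℝ 1 f) (hsupp : HasCompactSupport f) (v : E) :
    ∫ y, u y • fderiv ℝ f y v ∂μ = -∫ y, fderiv ℝ u y v • f y ∂μ := by
  have hint {a : E → ℝ} {b : E → F} (ha : Continuous a) (hb : Continuous b)
      (hbs : HasCompactSupport b) : Integrable (fun y ↦ a y • b y) μ :=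
    ha.locallyIntegrable.integrable_smul_right_of_hasCompactSupport hb hbs
  have hu' := (contDiff_fderiv_apply_const (m := 0) hu (by norm_num) v).continuous
  have hf' := (contDiff_fderiv_apply_const (m := 0) hf (by norm_num) v).continuous
  exact integral_smul_fderiv_eq_neg_fderiv_smul_of_integrable
    (hint hu' hf.continuous hsupp) (hint hu.continuous hf' (hsupp.fderiv_apply ℝ v))
    (hint hu.continuous hf.continuous hsupp) (fun y _ ↦ hu.differentiable one_ne_zero y)
    (fun y _ ↦ hf.differentiable one_ne_zero y)

theorem integral_smul_fderiv_fderiv_eq_integral_fderiv_fderiv_smul (hu : ContDiff ℝ 2 u)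
    (hf : ContDiff ℝ 2 f) (hsupp : HasCompactSupport f) (v : E) :
    ∫ y, u y • fderiv ℝ (fun z ↦ fderiv ℝ f z v) y v ∂μ
      = ∫ y, fderiv ℝ (fun z ↦ fderiv ℝ u z v) y v • f y ∂μ := by
  have hu' : ContDiff ℝ 1 (fun z ↦ fderiv ℝ u z v) :=
    contDiff_fderiv_apply_const hu (by norm_num) v
  have hf' : ContDiff ℝ 1 (fun z ↦ fderiv ℝ f z v) :=
    contDiff_fderiv_apply_const hf (by norm_num) v
  rw [integral_smul_fderiv_eq_neg_fderiv_smul_of_hasCompactSupport (hu.of_le (by norm_num)) hf'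
      (hsupp.fderiv_apply ℝ v),
    integral_smul_fderiv_eq_neg_fderiv_smul_of_hasCompactSupport hu' (hf.of_le (by norm_num))
      hsupp, neg_neg]

end Green

section GreenLaplacian

variable {E F : Type*} [NormedAddCommGroup E] [InnerProductSpace ℝ E] [FiniteDimensional ℝ E]
  [MeasurableSpace E] [BorelSpace E] [NormedAddCommGroup F] [NormedSpace ℝ F]
  {μ : Measure E} [μ.IsAddHaarMeasure] {u : E → ℝ} {f : E → F}

theorem integral_smul_laplacian_eq_integral_laplacian_smul (hu : ContDiff ℝ 2 u)
    (hf : ContDiff ℝ 2 f) (hsupp : HasCompactSupport f) :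
    ∫ y, u y • Δ f y ∂μ = ∫ y, Δ u y • f y ∂μ := by
  let v := stdOrthonormalBasis ℝ E
  simp_rw [laplacian_apply_eq_sum_fderiv_fderiv_apply v hf,
    laplacian_apply_eq_sum_fderiv_fderiv_apply v hu, Finset.smul_sum, Finset.sum_smul]
  rw [integral_finsetSum, integral_finsetSum]
  · exact Finset.sum_congr rfl fun i _ ↦
      integral_smul_fderiv_fderiv_eq_integral_fderiv_fderiv_smul hu hf hsupp (v i)
  · exact fun i _ ↦ (continuous_fderiv_fderiv_apply hu (v i) (v i)).locallyIntegrable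
      |>.integrable_smul_right_of_hasCompactSupport hf.continuous hsupp
  · exact fun i _ ↦ hu.continuous.locallyIntegrable.integrable_smul_right_of_hasCompactSupport
      (continuous_fderiv_fderiv_apply hf (v i) (v i))
      ((hsupp.fderiv_apply ℝ (v i)).fderiv_apply ℝ (v i))

end GreenLaplacian

section Bump

theorem hasDerivAt_pow_mul_one_add_sq_rpow (n : ℕ) (r : ℝ) :
    HasDerivAt (fun r : ℝ ↦ r ^ n * (1 + r ^ 2) ^ (-(n : ℝ) / 2))
      (n * (r ^ (n - 1) * (1 + r ^ 2) ^ (-((n : ℝ) + 2) / 2))) r := by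
  have hpos : 0 < 1 + r ^ 2 := by positivity
  have hbase : HasDerivAt (fun r : ℝ ↦ 1 + r ^ 2) (2 * r) r := by
    simpa using (hasDerivAt_pow 2 r).const_add 1
  refine ((hasDerivAt_pow n r).fun_mul
    (hbase.rpow_const (p := -(n : ℝ) / 2) (Or.inl hpos.ne'))).congr_deriv ?_
  have hsplit : (1 + r ^ 2) ^ (-(n : ℝ) / 2)
      = (1 + r ^ 2) ^ (-((n : ℝ) + 2) / 2) * (1 + r ^ 2) := by
    rw [← Real.rpow_add_one hpos.ne']
    ring_nf
  rw [hsplit, show -(n : ℝ) / 2 - 1 = -((n : ℝ) + 2) / 2 by ring]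
  cases n with
  | zero => simp
  | succ m =>
    simp only [Nat.add_sub_cancel]
    ring

theorem tendsto_one_add_sq_inv_atTop : Tendsto (fun r : ℝ ↦ (1 + r ^ 2)⁻¹) atTop (𝓝 0) :=
  (tendsto_atTop_add_const_left _ _ (tendsto_pow_atTop two_ne_zero)).inv_tendsto_atTop

theorem tendsto_pow_mul_one_add_sq_rpow_atTop (n : ℕ) :
    Tendsto (fun r : ℝ ↦ r ^ n * (1 + r ^ 2) ^ (-(n : ℝ) / 2)) atTop (𝓝 1) := by
  have hlim : Tendsto (fun r : ℝ ↦ (1 - (1 + r ^ 2)⁻¹) ^ ((n : ℝ) / 2)) atTop (𝓝 1) := by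
    simpa using (tendsto_one_add_sq_inv_atTop.const_sub 1).rpow_const (p := (n : ℝ) / 2)
      (Or.inl (by simp))
  refine hlim.congr' ?_
  filter_upwards [eventually_gt_atTop 0] with r hr
  have hpos : 0 < 1 + r ^ 2 := by positivity
  have hpow : (r ^ 2) ^ ((n : ℝ) / 2) = r ^ n := by
    rw [← Real.rpow_natCast_mul hr.le, ← Real.rpow_natCast]
    push_cast
    ring_nf
  rw [show 1 - (1 + r ^ 2)⁻¹ = r ^ 2 * (1 + r ^ 2)⁻¹ by field_simp; ring,
    Real.mul_rpow (by positivity) (by positivity), hpow, Real.inv_rpow hpos.le,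
    ← Real.rpow_neg hpos.le, neg_div]

theorem mul_integral_Ioi_pow_mul_one_add_sq_rpow {n : ℕ} (hn : n ≠ 0) :
    (n : ℝ) * ∫ r in Ioi (0 : ℝ), r ^ (n - 1) * (1 + r ^ 2) ^ (-((n : ℝ) + 2) / 2) = 1 := by
  rw [← integral_const_mul, integral_Ioi_of_hasDerivAt_of_nonneg'
    (fun r _ ↦ hasDerivAt_pow_mul_one_add_sq_rpow n r) (fun r hr ↦ ?_)
    (tendsto_pow_mul_one_add_sq_rpow_atTop n)]
  · simp [hn]
  · have : (0 : ℝ) < r := hr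
    positivity

end Bump

section Kernels

variable {E : Type*} [NormedAddCommGroup E] [NormedSpace ℝ E]

/-- The Newtonian kernel `‖z‖ ^ (2 - d)` on a `d`-dimensional space, smoothed at scale `ε`; the
kernel itself is the case `ε = 0`. -/
noncomputable def smoothedNewtonKernel (ε : ℝ) (z : E) : ℝ :=
  (ε ^ 2 + ‖z‖ ^ 2) ^ ((2 - (finrank ℝ E : ℝ)) / 2)

/-- The bump function of width `ε` to which the Laplacian of the smoothed Newtonian kernel is
proportional. Its mass does not depend on `ε`. -/
noncomputable def newtonBump (ε : ℝ) (z : E) : ℝ :=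
  ε ^ 2 * (ε ^ 2 + ‖z‖ ^ 2) ^ (-((finrank ℝ E : ℝ) + 2) / 2)

theorem newtonBump_nonneg (ε : ℝ) (z : E) : 0 ≤ newtonBump ε z := by
  unfold newtonBump
  positivity

theorem newtonBump_sub_comm (ε : ℝ) (x y : E) : newtonBump ε (x - y) = newtonBump ε (y - x) := by
  rw [newtonBump, newtonBump, norm_sub_rev]

theorem newtonBump_eq_inv_pow_mul {ε : ℝ} (hε : 0 < ε) (z : E) :
    newtonBump ε z = ε⁻¹ ^ finrank ℝ E * newtonBump 1 (ε⁻¹ • z) := by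
  set d := finrank ℝ E with hd
  have hscale : 1 + ‖ε⁻¹ • z‖ ^ 2 = (ε ^ 2)⁻¹ * (ε ^ 2 + ‖z‖ ^ 2) := by
    rw [norm_smul, Real.norm_of_nonneg (by positivity)]
    field_simp
  have hpow : ((ε ^ 2)⁻¹) ^ (-((d : ℝ) + 2) / 2) = ε ^ d * ε ^ 2 := by
    rw [← pow_add, Real.inv_rpow (by positivity), ← Real.rpow_neg (by positivity),
      ← Real.rpow_natCast_mul hε.le, ← Real.rpow_natCast]
    push_cast
    ring_nf
  simp only [newtonBump, ← hd]
  rw [one_pow, one_mul, hscale, Real.mul_rpow (by positivity) (by positivity), hpow, inv_pow]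
  field_simp

theorem tendsto_norm_pow_mul_newtonBump_one_cobounded :
    Tendsto (fun z : E ↦ ‖z‖ ^ finrank ℝ E * newtonBump 1 z) (cobounded E) (𝓝 0) := by
  have hradial : Tendsto (fun r : ℝ ↦ r ^ finrank ℝ E *
      (1 + r ^ 2) ^ (-(finrank ℝ E : ℝ) / 2) * (1 + r ^ 2)⁻¹) atTop (𝓝 0) := by
    simpa using (tendsto_pow_mul_one_add_sq_rpow_atTop (finrank ℝ E)).mul
      tendsto_one_add_sq_inv_atTop
  refine (hradial.comp tendsto_norm_cobounded_atTop).congr fun z ↦ ?_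
  have hpos : 0 < 1 + ‖z‖ ^ 2 := by positivity
  have hexp : -((finrank ℝ E : ℝ) + 2) / 2 = -(finrank ℝ E : ℝ) / 2 - 1 := by ring
  simp only [Function.comp_apply, newtonBump, one_pow, one_mul, hexp, Real.rpow_sub_one hpos.ne']
  ring

theorem smoothedNewtonKernel_zero (hd : 2 ≤ finrank ℝ E) (z : E) :
    smoothedNewtonKernel 0 z = (‖z‖ ^ (finrank ℝ E - 2))⁻¹ := by
  rw [smoothedNewtonKernel, zero_pow two_ne_zero, zero_add, ← Real.rpow_natCast_mul (norm_nonneg z),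
    ← Real.rpow_natCast, ← Real.rpow_neg (norm_nonneg z), Nat.cast_sub hd]
  push_cast
  ring_nf

theorem smoothedNewtonKernel_nonneg (ε : ℝ) (z : E) : 0 ≤ smoothedNewtonKernel ε z := by
  unfold smoothedNewtonKernel
  positivity

theorem smoothedNewtonKernel_le_smoothedNewtonKernel_zero (hd : 2 ≤ finrank ℝ E) (ε : ℝ) {z : E}
    (hz : z ≠ 0) : smoothedNewtonKernel ε z ≤ smoothedNewtonKernel 0 z := by
  have hd' : (2 : ℝ) ≤ finrank ℝ E := mod_cast hd
  have : 0 < ‖z‖ := norm_pos_iff.2 hz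
  exact Real.rpow_le_rpow_of_nonpos (by positivity) (by linarith [sq_nonneg ε]) (by linarith)

theorem continuous_smoothedNewtonKernel {ε : ℝ} (hε : ε ≠ 0) :
    Continuous (smoothedNewtonKernel ε : E → ℝ) :=
  Continuous.rpow_const (by fun_prop) fun z ↦ Or.inl (by positivity)

theorem tendsto_smoothedNewtonKernel {z : E} (hz : z ≠ 0) :
    Tendsto (smoothedNewtonKernel · z) (𝓝 0) (𝓝 (smoothedNewtonKernel 0 z)) := by
  have : 0 < ‖z‖ := norm_pos_iff.2 hz
  exact ContinuousAt.rpow_const (by fun_prop) (Or.inl (by positivity))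

end Kernels

section KernelCalculus

variable {E : Type*} [NormedAddCommGroup E] [InnerProductSpace ℝ E]

theorem contDiff_smoothedNewtonKernel {ε : ℝ} (hε : ε ≠ 0) {m : WithTop ℕ∞} :
    ContDiff ℝ m (smoothedNewtonKernel ε : E → ℝ) :=
  (contDiff_const.add (contDiff_norm_sq ℝ)).rpow_const_of_ne fun z ↦ by positivity

theorem laplacian_smoothedNewtonKernel_sub [FiniteDimensional ℝ E] {ε : ℝ} (hε : ε ≠ 0) (x y : E) :
    Δ (fun z ↦ smoothedNewtonKernel ε (z - x)) y
      = -((finrank ℝ E - 2) * finrank ℝ E) * newtonBump ε (y - x) := by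
  set d : ℝ := (finrank ℝ E : ℝ) with hd
  have hpos {s : ℝ} (hs : 0 ≤ s) : ε ^ 2 + s ≠ 0 := by positivity
  have hderiv (p : ℝ) {s : ℝ} (hs : 0 ≤ s) :
      HasDerivAt (fun s ↦ (ε ^ 2 + s) ^ p) (p * (ε ^ 2 + s) ^ (p - 1)) s := by
    simpa using ((hasDerivAt_id s).const_add (ε ^ 2)).rpow_const (p := p) (Or.inl (hpos hs))
  have hnorm : 0 ≤ ‖y - x‖ ^ 2 := by positivity
  simp only [smoothedNewtonKernel, newtonBump, ← hd]
  rw [laplacian_comp_norm_sub_sq (fun s hs ↦ hderiv ((2 - d) / 2) hs)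
    ((hderiv ((2 - d) / 2 - 1) hnorm).const_mul _),
    show -(d + 2) / 2 = (2 - d) / 2 - 1 - 1 by ring,
    Real.rpow_sub_one (hpos hnorm) ((2 - d) / 2 - 1)]
  field_simp [hpos hnorm]
  ring

end KernelCalculus

section MeasureBall

variable {X : Type*} [PseudoMetricSpace X] [ProperSpace X] [MeasurableSpace X]

theorem measureReal_ball_pos (μ : Measure X) [μ.IsOpenPosMeasure] [IsFiniteMeasureOnCompacts μ]
    (x : X) {r : ℝ} (hr : 0 < r) : 0 < μ.real (ball x r) :=
  ENNReal.toReal_pos (measure_ball_pos μ x hr).ne' measure_ball_lt_top.ne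

end MeasureBall

section Limits

variable {E F : Type*} [NormedAddCommGroup E] [NormedSpace ℝ E] [FiniteDimensional ℝ E]
  [MeasurableSpace E] [BorelSpace E] {μ : Measure E} [μ.IsAddHaarMeasure]
  [NormedAddCommGroup F] [NormedSpace ℝ F] {g : E → F} {x : E}

theorem integral_newtonBump_one [Nontrivial E] :
    ∫ z : E, newtonBump 1 z ∂μ = μ.real (ball 0 1) := by
  simp only [newtonBump, one_pow, one_mul]
  rw [integral_fun_norm_addHaar μ (fun r : ℝ ↦ (1 + r ^ 2) ^ (-((finrank ℝ E : ℝ) + 2) / 2))]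
  simp only [nsmul_eq_mul, smul_eq_mul]
  rw [mul_left_comm, mul_integral_Ioi_pow_mul_one_add_sq_rpow finrank_pos.ne', mul_one]

theorem locallyIntegrable_inv_norm_pow {k : ℕ} (hk : k < finrank ℝ E) :
    LocallyIntegrable (fun z : E ↦ (‖z‖ ^ k)⁻¹) μ := by
  have : Nontrivial E := nontrivial_of_finrank_pos (R := ℝ) (by omega)
  intro z
  refine ⟨ball 0 (‖z‖ + 1), isOpen_ball.mem_nhds (by simp), ?_⟩
  rw [integrableOn_fun_norm_addHaar μ (f := fun r : ℝ ↦ (r ^ k)⁻¹)]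
  have hpow : IntegrableOn (fun r : ℝ ↦ r ^ (finrank ℝ E - 1 - k)) (Ioo 0 (‖z‖ + 1)) :=
    (continuous_pow _).integrableOn_Icc.mono_set Ioo_subset_Icc_self
  refine hpow.congr_fun (fun r hr ↦ ?_) measurableSet_Ioo
  simp only [smul_eq_mul]
  rw [pow_sub₀ r hr.1.ne' (by omega)]

theorem integrable_inv_norm_sub_pow_smul {k : ℕ} (hk : k < finrank ℝ E) (hg : Continuous g)
    (hsupp : HasCompactSupport g) (x : E) :
    Integrable (fun y ↦ (‖x - y‖ ^ k)⁻¹ • g y) μ := by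
  have hshift : Integrable (fun z ↦ (‖z‖ ^ k)⁻¹ • g (x - z)) μ :=
    (locallyIntegrable_inv_norm_pow hk).integrable_smul_right_of_hasCompactSupport
      (by fun_prop) (hsupp.comp_homeomorph (Homeomorph.subLeft x))
  simpa using hshift.comp_sub_left x

theorem tendsto_integral_smoothedNewtonKernel_smul (hd : 2 ≤ finrank ℝ E)
    (hg : AEStronglyMeasurable g μ)
    (hint : Integrable (fun y ↦ (‖x - y‖ ^ (finrank ℝ E - 2))⁻¹ • g y) μ) :
    Tendsto (fun ε ↦ ∫ y, smoothedNewtonKernel ε (y - x) • g y ∂μ) (𝓝[>] 0)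
      (𝓝 (∫ y, (‖x - y‖ ^ (finrank ℝ E - 2))⁻¹ • g y ∂μ)) := by
  have : Nontrivial E := nontrivial_of_finrank_pos (R := ℝ) (by omega)
  have hne : ∀ᵐ y ∂μ, y - x ≠ 0 := by simp [ae_iff, sub_eq_zero]
  simp_rw [norm_sub_rev x, ← smoothedNewtonKernel_zero hd] at hint ⊢
  refine tendsto_integral_filter_of_dominated_convergence _ ?_ ?_ hint.norm ?_
  · filter_upwards [self_mem_nhdsWithin] with ε hε
    exact ((continuous_smoothedNewtonKernel (ne_of_gt hε)).comp
      (continuous_sub_right x)).aestronglyMeasurable.smul hg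
  · refine Eventually.of_forall fun ε ↦ ?_
    filter_upwards [hne] with y hy
    rw [norm_smul, norm_smul, Real.norm_of_nonneg (smoothedNewtonKernel_nonneg _ _),
      Real.norm_of_nonneg (smoothedNewtonKernel_nonneg _ _)]
    gcongr
    exact smoothedNewtonKernel_le_smoothedNewtonKernel_zero hd ε hy
  · filter_upwards [hne] with y hy
    exact ((tendsto_smoothedNewtonKernel hy).mono_left nhdsWithin_le_nhds).smul_const _

theorem tendsto_integral_newtonBump_smul [CompleteSpace F] [Nontrivial E] (hint : Integrable g μ)
    (hg : ContinuousAt g x) :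
    Tendsto (fun ε ↦ ∫ y, newtonBump ε (y - x) • g y ∂μ) (𝓝[>] 0)
      (𝓝 (μ.real (ball 0 1) • g x)) := by
  have hmass : μ.real (ball (0 : E) 1) ≠ 0 := (measureReal_ball_pos μ 0 one_pos).ne'
  have hpeak := tendsto_integral_comp_smul_smul_of_integrable' (μ := μ)
    (φ := fun z ↦ (μ.real (ball (0 : E) 1))⁻¹ * newtonBump 1 z)
    (fun z ↦ mul_nonneg (by positivity) (newtonBump_nonneg 1 z))
    (by rw [integral_const_mul, integral_newtonBump_one, inv_mul_cancel₀ hmass])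
    (by simpa [mul_left_comm] using
      (tendsto_norm_pow_mul_newtonBump_one_cobounded (E := E)).const_mul (μ.real (ball 0 1))⁻¹)
    hint hg
  refine ((hpeak.comp tendsto_inv_nhdsGT_zero).const_smul (μ.real (ball (0 : E) 1))).congr' ?_
  filter_upwards [self_mem_nhdsWithin] with ε hε
  rw [Function.comp_apply, ← integral_smul]
  congr with y
  rw [smul_smul, mul_left_comm, mul_inv_cancel_left₀ hmass, newtonBump_sub_comm,
    newtonBump_eq_inv_pow_mul hε]

end Limits

section Main

variable {E F : Type*} [NormedAddCommGroup E] [InnerProductSpace ℝ E] [FiniteDimensional ℝ E]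
  [MeasurableSpace E] [BorelSpace E] (μ : Measure E) [μ.IsAddHaarMeasure]
  [NormedAddCommGroup F] [NormedSpace ℝ F]

theorem integral_smoothedNewtonKernel_smul_laplacian {f : E → F} (hf : ContDiff ℝ 2 f)
    (hsupp : HasCompactSupport f) (x : E) {ε : ℝ} (hε : ε ≠ 0) :
    ∫ y, smoothedNewtonKernel ε (y - x) • Δ f y ∂μ
      = (-((finrank ℝ E - 2) * finrank ℝ E) : ℝ) • ∫ y, newtonBump ε (y - x) • f y ∂μ := by
  have hsmooth : ContDiff ℝ 2 (fun y ↦ smoothedNewtonKernel ε (y - x)) :=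
    (contDiff_smoothedNewtonKernel hε).comp (contDiff_id.sub contDiff_const)
  rw [integral_smul_laplacian_eq_integral_laplacian_smul hsmooth hf hsupp, ← integral_smul]
  simp_rw [laplacian_smoothedNewtonKernel_sub hε, mul_smul]

theorem integral_inv_norm_sub_pow_smul_laplacian [CompleteSpace F] (hd : 2 ≤ finrank ℝ E)
    {f : E → F} (hf : ContDiff ℝ 2 f) (hsupp : HasCompactSupport f) (x : E) :
    ∫ y, (‖x - y‖ ^ (finrank ℝ E - 2))⁻¹ • Δ f y ∂μ
      = (-((finrank ℝ E - 2) * (finrank ℝ E * μ.real (ball 0 1))) : ℝ) • f x := by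
  have : Nontrivial E := nontrivial_of_finrank_pos (R := ℝ) (by omega)
  have hkernel := tendsto_integral_smoothedNewtonKernel_smul hd
    (continuous_laplacian hf).aestronglyMeasurable
    (integrable_inv_norm_sub_pow_smul (μ := μ) (by omega) (continuous_laplacian hf)
      (hasCompactSupport_laplacian hsupp) x)
  have hbump := (tendsto_integral_newtonBump_smul (μ := μ)
    (hf.continuous.integrable_of_hasCompactSupport hsupp)
    (hf.continuous.continuousAt (x := x))).const_smul
    (-((finrank ℝ E - 2) * finrank ℝ E) : ℝ)
  rw [smul_smul, neg_mul, mul_assoc] at hbump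
  refine tendsto_nhds_unique_of_eventuallyEq hkernel hbump ?_
  filter_upwards [self_mem_nhdsWithin] with ε hε
  exact integral_smoothedNewtonKernel_smul_laplacian μ hf hsupp x (ne_of_gt hε)

theorem newtonian_potential_identity_general [CompleteSpace F] (hd : 3 ≤ finrank ℝ E) {f : E → F}
    (hf : ContDiff ℝ 2 f) (hsupp : HasCompactSupport f) (x : E) :
    f x = (-(1 / (((finrank ℝ E : ℝ) - 2) * (finrank ℝ E * μ.real (ball 0 1))))) •
      ∫ y, (‖x - y‖ ^ (finrank ℝ E - 2))⁻¹ • Δ f y ∂μ := by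
  have hd' : (3 : ℝ) ≤ finrank ℝ E := mod_cast hd
  have hball : 0 < μ.real (ball (0 : E) 1) := measureReal_ball_pos μ 0 one_pos
  have hcoef : ((finrank ℝ E : ℝ) - 2) * (finrank ℝ E * μ.real (ball 0 1)) ≠ 0 :=
    mul_ne_zero (by linarith) (by positivity)
  rw [integral_inv_norm_sub_pow_smul_laplacian μ (by omega) hf hsupp, smul_smul, neg_mul_neg,
    one_div_mul_cancel hcoef, one_smul]

end Main

/-- Newtonian-potential identity: for `f ∈ C_c^∞(ℝⁿ)` with `n ≥ 3`,
`f(x) = -1/((n-2) S_{n-1}) ∫ Δf(y) / ‖x - y‖^{n-2} dy`. -/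
theorem newtonian_potential_identity {n : ℕ} (hn : 3 ≤ n)
    (f : EuclideanSpace ℝ (Fin n) → ℝ) (hf : ContDiff ℝ (⊤ : ℕ∞) f)
    (hsupp : HasCompactSupport f) (x : EuclideanSpace ℝ (Fin n)) :
    f x = -(1 / (((n : ℝ) - 2) * sphereArea n)) *
      ∫ y : EuclideanSpace ℝ (Fin n), euclideanLaplacian f y / ‖x - y‖ ^ (n - 2) := by
  have hf₂ : ContDiff ℝ 2 f := contDiff_infty.1 hf 2
  simpa [euclideanLaplacian_eq_laplacian hf₂, sphereArea, Measure.real, div_eq_inv_mul]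
    using newtonian_potential_identity_general volume (by simpa using hn) hf₂ hsupp x
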